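/- The 3DSMI instance of dimension 3 with vertex set {0,1,…,8} (vertex v having gender v mod 3, edges going from gender g to gender (g+1) mod 3), with rank-1 edges 0→1, 1→2, 2→3, 3→4, 4→5, 5→0, 6→4, 7→8, 8→0, rank-2 edges 4→8, 8→6, 0→7, 1→5, 5→3, 3→1, and rank-3 edge 4→2, admits no weakly stable matching. -/

import Mathlib

/-!
A family fails to block a matching exactly when one of its vertices already has a family of the
matching that it likes at least as much; such a family is called an obstructor below. So a weakly
stable matching contains, for each family of the instance, one of its obstructors.

In `G2` write `abc` for the family `(a, b, c)`, and let `F` be a weakly stable matching. If `F`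
contained `015`, the only obstructor of `648` disjoint from `015` would be `648` itself, but then
every obstructor of `312` meets `015` or `648`. Hence `F` contains `078`, the only other obstructor
of `078`. The remaining obstructors of `015` are `312`, which would let `345` block, and `315`,
which together with `078` would let `342` block.
-/

/-- A 3DSMI instance of dimension `n`: a directed graph on a vertex set `V`
partitioned into three genders (men, women, dogs), each of size `n`, where every
edge goes from gender `g` to gender `g+1`, together with a rank function such that
for every vertex of out-degree `k` the ranks of its outgoing edges are exactly
`1, …, k`. -/
structure TDSMI (V : Type) [Fintype V] [DecidableEq V] (n : ℕ) where
  E : V → V → Bool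
  r : V → V → ℕ
  gender : V → Fin 3
  gender_card : ∀ g : Fin 3, (Finset.univ.filter fun v => gender v = g).card = n
  edge_gender : ∀ v w : V, E v w → gender w = gender v + 1
  rank_bij : ∀ v : V,
    (Finset.univ.filter fun w => E v w).image (r v)
      = Finset.Icc 1 (Finset.univ.filter fun w => E v w).card

namespace TDSMI

variable {V : Type} [Fintype V] [DecidableEq V] {n : ℕ}

/-- A family: a directed 3-cycle `a → b → c → a`. -/
def IsFamily (G : TDSMI V n) (a b c : V) : Prop :=
  G.E a b ∧ G.E b c ∧ G.E c a

/-- `v` is one of the vertices of the triple `t`. -/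
def MemTriple (v : V) (t : V × V × V) : Prop :=
  v = t.1 ∨ v = t.2.1 ∨ v = t.2.2

/-- A matching: a set of pairwise vertex-disjoint families. -/
def IsMatching (G : TDSMI V n) (F : Finset (V × V × V)) : Prop :=
  (∀ t ∈ F, G.IsFamily t.1 t.2.1 t.2.2) ∧
  ∀ t ∈ F, ∀ t' ∈ F, t ≠ t' → ∀ v : V, ¬ (MemTriple v t ∧ MemTriple v t')

/-- `w` is the vertex that the edge leaving `v` inside its family of `F` points to. -/
def MatchedTo (F : Finset (V × V × V)) (v w : V) : Prop :=
  ∃ t ∈ F, (t.1 = v ∧ t.2.1 = w) ∨ (t.2.1 = v ∧ t.2.2 = w) ∨ (t.2.2 = v ∧ t.1 = w)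

/-- `r(v,w) < R_F(v)`: the rank of the edge `v → w` is smaller than the rank of `v` in
the matching `F` (if `v` is in no family of `F`, its rank is `+∞` and this holds
vacuously). -/
def Prefers (G : TDSMI V n) (F : Finset (V × V × V)) (v w : V) : Prop :=
  ∀ u : V, MatchedTo F v u → G.r v w < G.r v u

/-- The directed 3-cycle `(a, b, c)` blocks the matching `F`. -/
def Blocks (G : TDSMI V n) (F : Finset (V × V × V)) (a b c : V) : Prop :=
  G.IsFamily a b c ∧ G.Prefers F a b ∧ G.Prefers F b c ∧ G.Prefers F c a

/-- A matching is weakly stable if no directed 3-cycle blocks it. -/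
def WeaklyStable (G : TDSMI V n) (F : Finset (V × V × V)) : Prop :=
  ∀ a b c : V, ¬ G.Blocks F a b c

end TDSMI

def rank1Edges : List (ℕ × ℕ) := [(0,1),(1,2),(2,3),(3,4),(4,5),(5,0),(6,4),(7,8),(8,0)]
def rank2Edges : List (ℕ × ℕ) := [(4,8),(8,6),(0,7),(1,5),(5,3),(3,1)]
def rank3Edges : List (ℕ × ℕ) := [(4,2)]

/-- The 3DSMI instance of dimension 3 from Fig. 2 of the paper. -/
def G2 : TDSMI (Fin 9) 3 where
  E v w := decide ((v.val, w.val) ∈ rank1Edges ++ rank2Edges ++ rank3Edges)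
  r v w :=
    if (v.val, w.val) ∈ rank1Edges then 1
    else if (v.val, w.val) ∈ rank2Edges then 2
    else if (v.val, w.val) ∈ rank3Edges then 3
    else 0
  gender v := ⟨v.val % 3, Nat.mod_lt _ (by norm_num)⟩
  gender_card := by decide
  edge_gender := by decide
  rank_bij := by decide

namespace TDSMI

variable {V : Type}

/-- The cycle `t` is one of the families of the matching `F`. Going through `MatchedTo` makes this
independent of the vertex at which `F` lists the cycle. -/
def HasFamily (F : Finset (V × V × V)) (t : V × V × V) : Prop :=
  MatchedTo F t.1 t.2.1 ∧ MatchedTo F t.2.1 t.2.2 ∧ MatchedTo F t.2.2 t.1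

theorem HasFamily.rotate {F : Finset (V × V × V)} {a b c : V} (h : HasFamily F (a, b, c)) :
    HasFamily F (b, c, a) :=
  ⟨h.2.1, h.2.2, h.1⟩

theorem MatchedTo.exists_hasFamily {F : Finset (V × V × V)} {v u : V} (h : MatchedTo F v u) :
    ∃ w, HasFamily F (v, u, w) := by
  obtain ⟨⟨a, b, c⟩, ht, hvu⟩ := h
  have habc : HasFamily F (a, b, c) := ⟨⟨_, ht, by simp⟩, ⟨_, ht, by simp⟩, ⟨_, ht, by simp⟩⟩
  obtain ⟨rfl, rfl⟩ | ⟨rfl, rfl⟩ | ⟨rfl, rfl⟩ := hvu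
  exacts [⟨c, habc⟩, ⟨a, habc.rotate⟩, ⟨b, habc.rotate.rotate⟩]

variable [Fintype V] [DecidableEq V] {n : ℕ} {G : TDSMI V n} {F : Finset (V × V × V)}

instance (a b c : V) : Decidable (G.IsFamily a b c) :=
  inferInstanceAs (Decidable (_ ∧ _ ∧ _))

theorem ne_of_E {v w : V} (h : G.E v w) : v ≠ w := by
  rintro rfl
  have := G.edge_gender v v h
  omega

namespace IsMatching

theorem E_of_matchedTo (hF : G.IsMatching F) {v u : V} (h : MatchedTo F v u) : G.E v u := by
  obtain ⟨t, ht, ⟨rfl, rfl⟩ | ⟨rfl, rfl⟩ | ⟨rfl, rfl⟩⟩ := h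
  exacts [(hF.1 t ht).1, (hF.1 t ht).2.1, (hF.1 t ht).2.2]

theorem isFamily_of_hasFamily (hF : G.IsMatching F) {t : V × V × V} (h : HasFamily F t) :
    G.IsFamily t.1 t.2.1 t.2.2 :=
  ⟨hF.E_of_matchedTo h.1, hF.E_of_matchedTo h.2.1, hF.E_of_matchedTo h.2.2⟩

theorem matchedTo_unique (hF : G.IsMatching F) {v u w : V} (hu : MatchedTo F v u)
    (hw : MatchedTo F v w) : u = w := by
  obtain ⟨t, ht, hvu⟩ := hu
  obtain ⟨t', ht', hvw⟩ := hw
  obtain rfl : t = t' := by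
    by_contra hne
    exact hF.2 t ht t' ht' hne v (by grind [MemTriple])
  obtain ⟨hab, hbc, hca⟩ := hF.1 t ht
  have := ne_of_E hab
  have := ne_of_E hbc
  have := ne_of_E hca
  grind

theorem hasFamily_unique (hF : G.IsMatching F) {a b c b' c' : V} (h : HasFamily F (a, b, c))
    (h' : HasFamily F (a, b', c')) : b = b' ∧ c = c' := by
  obtain rfl := hF.matchedTo_unique h.1 h'.1
  exact ⟨rfl, hF.matchedTo_unique h.2.1 h'.2.1⟩

theorem eq_of_common_vertex (hF : G.IsMatching F) {s t : V × V × V} (hs : HasFamily F s)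
    (ht : HasFamily F t) (hst : s.1 = t.1 ∨ s.2.1 = t.2.1 ∨ s.2.2 = t.2.2) : s = t := by
  obtain ⟨a, b, c⟩ := s
  obtain ⟨a', b', c'⟩ := t
  obtain rfl | rfl | rfl : a = a' ∨ b = b' ∨ c = c' := hst
  · obtain ⟨rfl, rfl⟩ := hF.hasFamily_unique hs ht
    rfl
  · obtain ⟨rfl, rfl⟩ := hF.hasFamily_unique hs.rotate ht.rotate
    rfl
  · obtain ⟨rfl, rfl⟩ := hF.hasFamily_unique hs.rotate.rotate ht.rotate.rotate
    rfl

theorem not_hasFamily_of_common_vertex (hF : G.IsMatching F) {s t : V × V × V}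
    (hs : HasFamily F s) (hne : s ≠ t) (hst : s.1 = t.1 ∨ s.2.1 = t.2.1 ∨ s.2.2 = t.2.2) :
    ¬ HasFamily F t :=
  fun ht => hne (hF.eq_of_common_vertex hs ht hst)

end IsMatching

/-- The obstructors of a family `t`: the families `s` through a vertex of `t` which ranks its edge
in `s` no worse than its edge in `t`. They are exactly the families whose presence in a matching
stops `t` from blocking it. Only vertices in equal positions are compared, so that `s` is listed
starting from the gender of the first vertex of `t`. -/
def obstructors (G : TDSMI V n) (t : V × V × V) : Finset (V × V × V) :=
  {s | (s.1 = t.1 ∧ G.r s.1 s.2.1 ≤ G.r t.1 t.2.1 ∨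
      s.2.1 = t.2.1 ∧ G.r s.2.1 s.2.2 ≤ G.r t.2.1 t.2.2 ∨
      s.2.2 = t.2.2 ∧ G.r s.2.2 s.1 ≤ G.r t.2.2 t.1) ∧
    G.IsFamily s.1 s.2.1 s.2.2}

theorem exists_hasFamily_of_not_prefers {v w : V} (h : ¬ G.Prefers F v w) :
    ∃ x y, HasFamily F (v, x, y) ∧ G.r v x ≤ G.r v w := by
  simp only [Prefers, not_forall, not_lt] at h
  obtain ⟨x, hvx, hle⟩ := h
  obtain ⟨y, hy⟩ := hvx.exists_hasFamily
  exact ⟨x, y, hy, hle⟩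

theorem IsMatching.exists_mem_obstructors (hF : G.IsMatching F) {a b c : V}
    (hfam : G.IsFamily a b c) (hblock : ¬ G.Blocks F a b c) :
    ∃ s ∈ G.obstructors (a, b, c), HasFamily F s := by
  suffices ∃ x y z, HasFamily F (x, y, z) ∧
      (x = a ∧ G.r x y ≤ G.r a b ∨ y = b ∧ G.r y z ≤ G.r b c ∨ z = c ∧ G.r z x ≤ G.r c a) by
    obtain ⟨x, y, z, hs, hle⟩ := this
    exact ⟨(x, y, z), by simpa [obstructors] using ⟨hle, hF.isFamily_of_hasFamily hs⟩, hs⟩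
  have hnot : ¬ G.Prefers F a b ∨ ¬ G.Prefers F b c ∨ ¬ G.Prefers F c a := by
    rw [Blocks] at hblock
    tauto
  obtain ha | hb | hc := hnot
  · obtain ⟨x, y, hs, hle⟩ := exists_hasFamily_of_not_prefers ha
    exact ⟨a, x, y, hs, .inl ⟨rfl, hle⟩⟩
  · obtain ⟨x, y, hs, hle⟩ := exists_hasFamily_of_not_prefers hb
    exact ⟨y, b, x, hs.rotate.rotate, .inr (.inl ⟨rfl, hle⟩)⟩
  · obtain ⟨x, y, hs, hle⟩ := exists_hasFamily_of_not_prefers hc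
    exact ⟨x, y, c, hs.rotate, .inr (.inr ⟨rfl, hle⟩)⟩

end TDSMI

open TDSMI

namespace G2

theorem obstructors_015 : G2.obstructors (0, 1, 5) = {(0, 1, 5), (3, 1, 2), (3, 1, 5)} := by
  decide +kernel

theorem obstructors_078 : G2.obstructors (0, 7, 8) = {(0, 1, 5), (0, 7, 8)} := by
  decide +kernel

theorem obstructors_312 :
    G2.obstructors (3, 1, 2) = {(3, 1, 2), (3, 1, 5), (3, 4, 2), (3, 4, 5)} := by
  decide +kernel

theorem obstructors_342 :
    G2.obstructors (3, 4, 2) = {(3, 1, 2), (3, 4, 2), (3, 4, 5), (6, 4, 8)} := by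
  decide +kernel

theorem obstructors_345 :
    G2.obstructors (3, 4, 5) = {(0, 1, 5), (3, 1, 5), (3, 4, 2), (3, 4, 5)} := by
  decide +kernel

theorem obstructors_648 : G2.obstructors (6, 4, 8) = {(0, 7, 8), (3, 4, 5), (6, 4, 8)} := by
  decide +kernel

variable {F : Finset (Fin 9 × Fin 9 × Fin 9)}

theorem not_hasFamily_015 (hF : G2.IsMatching F) (hS : G2.WeaklyStable F) :
    ¬ HasFamily F (0, 1, 5) := by
  intro h015
  have h648 : HasFamily F (6, 4, 8) := by
    obtain h078 | h345 | h648 :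
        HasFamily F (0, 7, 8) ∨ HasFamily F (3, 4, 5) ∨ HasFamily F (6, 4, 8) := by
      simpa [obstructors_648] using hF.exists_mem_obstructors (by decide) (hS 6 4 8)
    · exact absurd h078 (hF.not_hasFamily_of_common_vertex h015 (by decide) (by decide))
    · exact absurd h345 (hF.not_hasFamily_of_common_vertex h015 (by decide) (by decide))
    · exact h648
  obtain h312 | h315 | h342 | h345 : HasFamily F (3, 1, 2) ∨ HasFamily F (3, 1, 5) ∨
      HasFamily F (3, 4, 2) ∨ HasFamily F (3, 4, 5) := by
    simpa [obstructors_312] using hF.exists_mem_obstructors (by decide) (hS 3 1 2)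
  · exact hF.not_hasFamily_of_common_vertex h015 (by decide) (by decide) h312
  · exact hF.not_hasFamily_of_common_vertex h015 (by decide) (by decide) h315
  · exact hF.not_hasFamily_of_common_vertex h648 (by decide) (by decide) h342
  · exact hF.not_hasFamily_of_common_vertex h648 (by decide) (by decide) h345

theorem hasFamily_078 (hF : G2.IsMatching F) (hS : G2.WeaklyStable F) :
    HasFamily F (0, 7, 8) := by
  have h : HasFamily F (0, 1, 5) ∨ HasFamily F (0, 7, 8) := by
    simpa [obstructors_078] using hF.exists_mem_obstructors (by decide) (hS 0 7 8)
  exact h.resolve_left (not_hasFamily_015 hF hS)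

theorem not_hasFamily_312 (hF : G2.IsMatching F) (hS : G2.WeaklyStable F) :
    ¬ HasFamily F (3, 1, 2) := by
  intro h312
  obtain h015 | h315 | h342 | h345 : HasFamily F (0, 1, 5) ∨ HasFamily F (3, 1, 5) ∨
      HasFamily F (3, 4, 2) ∨ HasFamily F (3, 4, 5) := by
    simpa [obstructors_345] using hF.exists_mem_obstructors (by decide) (hS 3 4 5)
  · exact hF.not_hasFamily_of_common_vertex h312 (by decide) (by decide) h015
  · exact hF.not_hasFamily_of_common_vertex h312 (by decide) (by decide) h315
  · exact hF.not_hasFamily_of_common_vertex h312 (by decide) (by decide) h342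
  · exact hF.not_hasFamily_of_common_vertex h312 (by decide) (by decide) h345

theorem not_hasFamily_315 (hF : G2.IsMatching F) (hS : G2.WeaklyStable F) :
    ¬ HasFamily F (3, 1, 5) := by
  intro h315
  obtain h312 | h342 | h345 | h648 : HasFamily F (3, 1, 2) ∨ HasFamily F (3, 4, 2) ∨
      HasFamily F (3, 4, 5) ∨ HasFamily F (6, 4, 8) := by
    simpa [obstructors_342] using hF.exists_mem_obstructors (by decide) (hS 3 4 2)
  · exact hF.not_hasFamily_of_common_vertex h315 (by decide) (by decide) h312
  · exact hF.not_hasFamily_of_common_vertex h315 (by decide) (by decide) h342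
  · exact hF.not_hasFamily_of_common_vertex h315 (by decide) (by decide) h345
  · exact hF.not_hasFamily_of_common_vertex (hasFamily_078 hF hS) (by decide) (by decide) h648

end G2

/-- This instance admits no weakly stable matching. -/
theorem stmt_2 : ¬ ∃ F : Finset (Fin 9 × Fin 9 × Fin 9),
    G2.IsMatching F ∧ G2.WeaklyStable F := by
  rintro ⟨F, hF, hS⟩
  obtain h015 | h312 | h315 :
      HasFamily F (0, 1, 5) ∨ HasFamily F (3, 1, 2) ∨ HasFamily F (3, 1, 5) := by
    simpa [G2.obstructors_015] using hF.exists_mem_obstructors (by decide) (hS 0 1 5)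
  · exact G2.not_hasFamily_015 hF hS h015
  · exact G2.not_hasFamily_312 hF hS h312
  · exact G2.not_hasFamily_315 hF hS h315
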